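/- For $\beta\in\mathbb R$ let $w_{\beta,\beta}(x)=(1-x^2)^\beta$, $\varphi(x)=\sqrt{1-x^2}$. For $k\in\mathbb N=\{1,2,\dots\}$ let $\Delta_h^k(f,x)=\sum_{i=0}^k\binom ki(-1)^{k-i}f(x-kh/2+ih)$ if $x\pm kh/2\in[-1,1]$ and $\Delta_h^k(f,x)=0$ otherwise, and let $$\Omega_\varphi^k(f,\delta)=\sup_{0<h\le\delta}\|w_{\beta,\beta}\,\Delta^k_{h\varphi(\cdot)}(f,\cdot)\|_{L^1[-1+2k^2h^2,\,1-2k^2h^2]},$$ $$\overrightarrow\Omega{}_\varphi^k(f,\delta)=\sup_{0<h\le2k^2\delta^2}\|w_{\beta,\beta}\,\Delta^k_h(f,\cdot+kh/2)\|_{L^1[-1,-1+2k^2\delta^2]},$$ $$\overleftarrow\Omega{}_\varphi^k(f,\delta)=\sup_{0<h\le2k^2\delta^2}\|w_{\beta,\beta}\,\Delta^k_h(f,\cdot-kh/2)\|_{L^1[1-2k^2\delta^2,1]},$$ and $\omega_\varphi^k(f,\delta)_{w_{\beta,\beta},1}=\Omega_\varphi^k(f,\delta)+\overrightarrow\Omega{}_\varphi^k(f,\delta)+\overleftarrow\Omega{}_\varphi^k(f,\delta)$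 (the weighted Ditzian–Totik modulus). Let $\mathcal M_+^k$ be the set of functions $f$ that are $k$-monotone on $(-1,1)$ (all divided differences $[x_0,\dots,x_k;f]$ over $k+1$ distinct points of $(-1,1)$ are nonnegative) and vanish on $(-1,0]$, and let $W_1^{\beta,\beta}$ be the set of measurable $f:[-1,1]\to\mathbb R$ with $\|w_{\beta,\beta}f\|_{L^1[-1,1]}<\infty$. Theorem. Let $k\in\mathbb N$ and $\beta\in\mathbb R$. There is a constant $c>0$, depending only on $k$ and $\beta$, such that for every $f\in\mathcal M_+^k\cap W_1^{\beta,\beta}$ and every $0<\delta\le 1/(2k)$, with $$R:=c\,\|w_{\beta,\beta}f\|_{L^1[1-3k^2\delta^2,1]}+c\sup_{0<h\le\delta}h^k\,\|(1-y^2)^{-k/2}w_{\beta,\beta}(y)f(y)\|_{L^1[0,1-2k^2h^2]},$$ the following hold. (i) $\Omega_\varphi^k(f,\delta)+\overleftarrow\Omega{}_\varphi^k(f,\delta)\le R$. (ii) If $k\le2$, or $\beta\le0$, or $2k^2(k+1)\delta^2\le 3/2$, then $\omega_\varphi^k(f,\delta)_{w_{\beta,\beta},1}\le R$. -/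

import Mathlib

open MeasureTheory Set Filter
open scoped ENNReal

noncomputable section

/-- The Jacobi weight `w_{α,β}(x) = (1+x)^α (1-x)^β`. -/
def jacobi (α β : ℝ) (x : ℝ) : ℝ := (1 + x) ^ α * (1 - x) ^ β

/-- `φ(x) = √(1-x²)`. -/
def phiW (x : ℝ) : ℝ := Real.sqrt (1 - x ^ 2)

/-- The `L^p` norm of `g` on the interval `[a,b]` (essential sup when `p = ∞`). -/
def LpOn (g : ℝ → ℝ) (p : ℝ≥0∞) (a b : ℝ) : ℝ≥0∞ :=
  eLpNorm g p (volume.restrict (Icc a b))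

/-- The `k`-th symmetric difference `Δ_h^k(f,x)` relative to `[-1,1]`. -/
def symmDelta (k : ℕ) (h : ℝ) (f : ℝ → ℝ) (x : ℝ) : ℝ :=
  if (x - k * h / 2 ∈ Icc (-1 : ℝ) 1 ∧ x + k * h / 2 ∈ Icc (-1 : ℝ) 1) then
    ∑ i ∈ Finset.range (k + 1), ((k.choose i : ℝ) * (-1 : ℝ) ^ (k - i) * f (x - k * h / 2 + i * h))
  else 0

/-- Main-part weighted modulus `Ω_φ^k(f,δ)_{w,p}`. -/
def OmegaMain (k : ℕ) (f : ℝ → ℝ) (δ : ℝ) (wt : ℝ → ℝ) (p : ℝ≥0∞) : ℝ≥0∞ :=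
  ⨆ h ∈ Ioc (0 : ℝ) δ,
    LpOn (fun x => wt x * symmDelta k (h * phiW x) f x) p
      (-1 + 2 * (k : ℝ) ^ 2 * h ^ 2) (1 - 2 * (k : ℝ) ^ 2 * h ^ 2)

/-- Forward part `Ω→_φ^k(f,δ)_{w,p}`. -/
def OmegaFwd (k : ℕ) (f : ℝ → ℝ) (δ : ℝ) (wt : ℝ → ℝ) (p : ℝ≥0∞) : ℝ≥0∞ :=
  ⨆ h ∈ Ioc (0 : ℝ) (2 * (k : ℝ) ^ 2 * δ ^ 2),
    LpOn (fun x => wt x * symmDelta k h f (x + k * h / 2)) p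
      (-1) (-1 + 2 * (k : ℝ) ^ 2 * δ ^ 2)

/-- Backward part `Ω←_φ^k(f,δ)_{w,p}`. -/
def OmegaBwd (k : ℕ) (f : ℝ → ℝ) (δ : ℝ) (wt : ℝ → ℝ) (p : ℝ≥0∞) : ℝ≥0∞ :=
  ⨆ h ∈ Ioc (0 : ℝ) (2 * (k : ℝ) ^ 2 * δ ^ 2),
    LpOn (fun x => wt x * symmDelta k h f (x - k * h / 2)) p
      (1 - 2 * (k : ℝ) ^ 2 * δ ^ 2) 1

/-- Weighted Ditzian–Totik modulus `ω_φ^k(f,δ)_{w,p}`. -/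
def omegaDT (k : ℕ) (f : ℝ → ℝ) (δ : ℝ) (wt : ℝ → ℝ) (p : ℝ≥0∞) : ℝ≥0∞ :=
  OmegaMain k f δ wt p + OmegaFwd k f δ wt p + OmegaBwd k f δ wt p

/-- `f` is `k`-monotone on `(-1,1)`: all `k`-th divided differences over `k+1` distinct
points of `(-1,1)` are nonnegative. -/
def kMonotoneOn (k : ℕ) (f : ℝ → ℝ) : Prop :=
  ∀ x : Fin (k + 1) → ℝ, Function.Injective x → (∀ i, x i ∈ Ioo (-1 : ℝ) 1) →
    0 ≤ ∑ i, f (x i) / ∏ j ∈ Finset.univ.erase i, (x i - x j)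

/-- `M_+^k`, the `k`-monotone functions on `(-1,1)` vanishing on `(-1,0]`. -/
def MPlus (k : ℕ) : Set (ℝ → ℝ) :=
  {f | kMonotoneOn k f ∧ ∀ x : ℝ, -1 < x → x ≤ 0 → f x = 0}

/-- `W_p^{α,β}`: (Lebesgue) measurable on `[-1,1]` with finite weighted norm. -/
def WSet (p : ℝ≥0∞) (α β : ℝ) : Set (ℝ → ℝ) :=
  {f | AEMeasurable f (volume.restrict (Icc (-1 : ℝ) 1)) ∧
    LpOn (fun x => jacobi α β x * f x) p (-1) 1 ≠ ⊤}

/-- `‖w_{β,β} f‖` in `L¹[1 - 3k²δ², 1]`. -/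
def endTerm (k : ℕ) (β : ℝ) (f : ℝ → ℝ) (δ : ℝ) : ℝ≥0∞ :=
  LpOn (fun x => jacobi β β x * f x) 1 (1 - 3 * (k : ℝ) ^ 2 * δ ^ 2) 1

/-- The supremum over `0 < h ≤ δ` of `h^k` times the norm of
`(1-y²)^{-k/2} w_{β,β}(y) f(y)` in `L¹[0, 1 - 2k²h²]`. -/
def innerTerm (k : ℕ) (β : ℝ) (f : ℝ → ℝ) (δ : ℝ) : ℝ≥0∞ :=
  ⨆ h ∈ Ioc (0 : ℝ) δ,
    ENNReal.ofReal (h ^ k) *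
      LpOn (fun y => (1 - y ^ 2) ^ (-(k : ℝ) / 2) * (jacobi β β y * f y)) 1
        0 (1 - 2 * (k : ℝ) ^ 2 * h ^ 2)

end

/-!
For `x ≥ -1/4` the difference `Δ_{hφ}^k f` is nonnegative by `k`-monotonicity, and for `x < -1/4` it
vanishes because `f` does. Its weighted `L¹` norm is therefore an integral without absolute values,
in which the nodes can be separated: in the term with node `y = x + a φ(x)`, `a = (i - k/2) h`, take
`y` as the new variable. The Jacobian and the ratio of the weights combine into a kernel depending
only on `y` and `a / φ(y)` and smooth in the latter, so the alternating sum over the nodes is a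
`k`-th difference of step `h / φ(y)` of a smooth function, of size `(h / φ(y))^k`. Where `y` is so
close to `1` that some nodes are missing, `h / φ(y)` is bounded below and the trivial bound
suffices.

Near the endpoints `|Δ_h^k f|` is at most `2^k` times the value of `f` at the last node, because `f`
is nonnegative and increasing. A measure-preserving map (the identity, a reflection or a
translation) then carries the end interval to the neighbourhood of `1` in the end term without
decreasing `f` and with comparable weights.
-/

open scoped ContDiff

section FiniteDifferences

theorem fwdDiff_iter_eq_sum_choose (k : ℕ) (h : ℝ) (f : ℝ → ℝ) (c : ℝ) :
    (fwdDiff h)^[k] f c =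
      ∑ i ∈ Finset.range (k + 1), (k.choose i : ℝ) * (-1 : ℝ) ^ (k - i) * f (c + i * h) := by
  rw [fwdDiff_iter_eq_sum_shift]
  refine Finset.sum_congr rfl fun i _ => ?_
  rw [zsmul_eq_mul, nsmul_eq_mul]
  push_cast
  ring

theorem add_natCast_mul_mem_Icc {i k : ℕ} {c h : ℝ} (hh : 0 ≤ h)
    (hi : i ∈ Finset.range (k + 1)) : c + i * h ∈ Icc c (c + k * h) := by
  have hik : (i : ℝ) ≤ k := by exact_mod_cast Nat.lt_succ_iff.mp (Finset.mem_range.mp hi)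
  constructor
  · have : 0 ≤ i * h := by positivity
    linarith
  · gcongr

theorem fwdDiff_iter_congr {k : ℕ} {f g : ℝ → ℝ} {c h : ℝ} (hh : 0 ≤ h)
    (hfg : EqOn f g (Icc c (c + k * h))) : (fwdDiff h)^[k] f c = (fwdDiff h)^[k] g c := by
  simp only [fwdDiff_iter_eq_sum_choose]
  exact Finset.sum_congr rfl fun i hi => by rw [hfg (add_natCast_mul_mem_Icc hh hi)]

theorem fwdDiff_iter_eq_zero {k : ℕ} {f : ℝ → ℝ} {c h : ℝ} (hh : 0 ≤ h)
    (hf : EqOn f 0 (Icc c (c + k * h))) : (fwdDiff h)^[k] f c = 0 := by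
  rw [fwdDiff_iter_congr hh hf, fwdDiff_iter_eq_sum_choose]
  simp

theorem abs_fwdDiff_iter_le {k : ℕ} {f : ℝ → ℝ} {c h B : ℝ} (hh : 0 ≤ h)
    (hB : ∀ x ∈ Icc c (c + k * h), |f x| ≤ B) : |(fwdDiff h)^[k] f c| ≤ 2 ^ k * B := by
  have hchoose : ∑ i ∈ Finset.range (k + 1), (k.choose i : ℝ) = 2 ^ k := by
    exact_mod_cast Nat.sum_range_choose k
  rw [fwdDiff_iter_eq_sum_choose, ← hchoose, Finset.sum_mul]
  refine (Finset.abs_sum_le_sum_abs _ _).trans (Finset.sum_le_sum fun i hi => ?_)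
  rw [abs_mul, abs_mul, abs_neg_one_pow, mul_one, Nat.abs_cast]
  exact mul_le_mul_of_nonneg_left (hB _ (add_natCast_mul_mem_Icc hh hi)) (by positivity)

theorem fwdDiff_iter_comp_affine (k : ℕ) (f : ℝ → ℝ) (h u s c : ℝ) :
    (fwdDiff h)^[k] (fun t => f (u + t * s)) c = (fwdDiff (h * s))^[k] f (u + c * s) := by
  simp only [fwdDiff_iter_eq_sum_choose]
  refine Finset.sum_congr rfl fun i _ => ?_
  rw [show u + (c + i * h) * s = u + c * s + i * (h * s) by ring]

theorem fwdDiff_iter_mul_const (k : ℕ) (f : ℝ → ℝ) (h r c : ℝ) :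
    (fwdDiff h)^[k] (fun t => f t * r) c = (fwdDiff h)^[k] f c * r := by
  simp only [fwdDiff_iter_eq_sum_choose, Finset.sum_mul, mul_assoc]

theorem integral_fwdDiff_iter {X : Type*} [MeasurableSpace X] {μ : Measure X} {k : ℕ}
    {F : ℝ → X → ℝ} {c h : ℝ} (hh : 0 ≤ h)
    (hF : ∀ t ∈ Icc c (c + k * h), Integrable (F t) μ) :
    ∫ x, (fwdDiff h)^[k] (F · x) c ∂μ = (fwdDiff h)^[k] (fun t => ∫ x, F t x ∂μ) c := by
  simp only [fwdDiff_iter_eq_sum_choose]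
  rw [integral_finsetSum _ fun i hi => (hF _ (add_natCast_mul_mem_Icc hh hi)).const_mul _]
  simp only [integral_const_mul]

theorem integrable_fwdDiff_iter {X : Type*} [MeasurableSpace X] {μ : Measure X} {k : ℕ}
    {F : ℝ → X → ℝ} {c h : ℝ} (hh : 0 ≤ h)
    (hF : ∀ t ∈ Icc c (c + k * h), Integrable (F t) μ) :
    Integrable (fun x => (fwdDiff h)^[k] (F · x) c) μ := by
  simp only [fwdDiff_iter_eq_sum_choose]
  exact integrable_finsetSum _ fun i hi => (hF _ (add_natCast_mul_mem_Icc hh hi)).const_mul _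

theorem hasDerivAt_fwdDiff_iter {k : ℕ} {f f' : ℝ → ℝ} {c h : ℝ} (hh : 0 ≤ h)
    (hf : ∀ x ∈ Icc c (c + k * h), HasDerivAt f (f' x) x) :
    HasDerivAt ((fwdDiff h)^[k] f) ((fwdDiff h)^[k] f' c) c := by
  rw [funext (fwdDiff_iter_eq_sum_choose k h f), fwdDiff_iter_eq_sum_choose]
  exact HasDerivAt.fun_sum fun i hi =>
    ((hf _ (add_natCast_mul_mem_Icc hh hi)).comp_add_const c (i * h)).const_mul _

/- By the mean value theorem a difference of `F` of order `k + 1` is `h` times a difference of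
order `k` of its partial derivative, which is smooth on the same open set. -/
theorem exists_abs_fwdDiff_iter_le_of_contDiffOn {E : Type*} [NormedAddCommGroup E]
    [NormedSpace ℝ E] {U : Set (E × ℝ)} (hU : IsOpen U) {K : Set E} (hK : IsCompact K) {a b : ℝ}
    (hKU : K ×ˢ Icc a b ⊆ U) (k : ℕ) {F : E × ℝ → ℝ} (hF : ContDiffOn ℝ ∞ F U) :
    ∃ M > 0, ∀ θ ∈ K, ∀ c h, 0 ≤ h → a ≤ c → c + k * h ≤ b →
      |(fwdDiff h)^[k] (fun t => F (θ, t)) c| ≤ M * h ^ k := by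
  induction k generalizing F with
  | zero =>
    obtain ⟨M, hM⟩ := (hK.prod isCompact_Icc).exists_bound_of_continuousOn
      (hF.continuousOn.mono hKU)
    refine ⟨max M 1, by positivity, fun θ hθ c h _ hac hcb => ?_⟩
    have hcb' : c ≤ b := by simpa using hcb
    simpa using (hM (θ, c) ⟨hθ, hac, hcb'⟩).trans (le_max_left M 1)
  | succ k ih =>
    have hpartial : ContDiffOn ℝ ∞ (fun p => fderiv ℝ F p (0, 1)) U :=
      (hF.fderiv_of_isOpen hU (by simp)).clm_apply contDiffOn_const
    obtain ⟨M, hM0, hM⟩ := ih hpartial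
    refine ⟨M, hM0, fun θ hθ c h hh hac hcb => ?_⟩
    push_cast at hcb
    have hderiv : ∀ t ∈ Icc a b,
        HasDerivAt (fun t => F (θ, t)) (fderiv ℝ F (θ, t) (0, 1)) t := fun t ht =>
      have hdiff := (hF.differentiableOn (by simp)).differentiableAt (hU.mem_nhds (hKU ⟨hθ, ht⟩))
      hdiff.hasFDerivAt.comp_hasDerivAt t ((hasDerivAt_const t θ).prodMk (hasDerivAt_id t))
    have hmvt := norm_image_sub_le_of_norm_deriv_le_segment' (a := c) (b := c + h)
      (f := (fwdDiff h)^[k] fun t => F (θ, t)) (C := M * h ^ k)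
      (fun t ht => (hasDerivAt_fwdDiff_iter hh fun s hs =>
        hderiv s ⟨by linarith [ht.1, hs.1], by linarith [ht.2, hs.2]⟩).hasDerivWithinAt)
      (fun t ht => hM θ hθ t h hh (by linarith [ht.1]) (by linarith [ht.2]))
      (c + h) ⟨by linarith, le_rfl⟩
    rw [Function.iterate_succ_apply', pow_succ, ← mul_assoc]
    simpa [fwdDiff] using hmvt

end FiniteDifferences

section Monotonicity

theorem prod_univ_erase_eq_prod_succAbove {M : Type*} [CommMonoid M] {n : ℕ} (i : Fin (n + 1))
    (g : Fin (n + 1) → M) : ∏ j ∈ Finset.univ.erase i, g j = ∏ j, g (i.succAbove j) := by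
  rw [← Finset.compl_singleton, ← Fin.image_succAbove_univ,
    Finset.prod_image i.succAbove_right_injective.injOn]

theorem prod_erase_range_sub (i m : ℕ) :
    ∏ j ∈ (Finset.range (i + m + 1)).erase i, ((i : ℝ) - j) =
      (-1) ^ m * (i.factorial * m.factorial) := by
  induction m with
  | zero =>
    have herase : (Finset.range (i + 0 + 1)).erase i = Finset.range i := by
      ext j; simp only [Finset.mem_erase, Finset.mem_range]; omega
    rw [herase, ← Nat.descFactorial_self i, Nat.descFactorial_eq_prod_range]
    push_cast
    rw [pow_zero, Nat.factorial_zero, Nat.cast_one, mul_one, one_mul]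
    exact Finset.prod_congr rfl fun j hj => (Nat.cast_sub (Finset.mem_range.mp hj).le).symm
  | succ m ih =>
    have herase : (Finset.range (i + (m + 1) + 1)).erase i =
        insert (i + m + 1) ((Finset.range (i + m + 1)).erase i) := by
      ext j; simp only [Finset.mem_erase, Finset.mem_range, Finset.mem_insert]; omega
    rw [herase, Finset.prod_insert (by simp), ih, Nat.factorial_succ]
    push_cast
    ring

theorem prod_erase_equispaced_sub {k : ℕ} (c s : ℝ) (i : Fin (k + 1)) :
    ∏ j ∈ Finset.univ.erase i, (c + (i : ℕ) * s - (c + (j : ℕ) * s)) =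
      s ^ k * ((-1) ^ (k - i : ℕ) * ((i : ℕ).factorial * (k - i : ℕ).factorial)) := by
  have hi : (i : ℕ) + (k - i) + 1 = k + 1 := by omega
  have hval : (Finset.univ.erase i).map Fin.valEmbedding = (Finset.range (k + 1)).erase i := by
    rw [Finset.map_erase, Fin.map_valEmbedding_univ]
    ext j; simp
  calc ∏ j ∈ Finset.univ.erase i, (c + (i : ℕ) * s - (c + (j : ℕ) * s))
      = ∏ j ∈ Finset.univ.erase i, s * (((i : ℕ) : ℝ) - (j : ℕ)) :=
        Finset.prod_congr rfl fun j _ => by ring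
    _ = s ^ k * ∏ j ∈ Finset.univ.erase i, (((i : ℕ) : ℝ) - (j : ℕ)) := by
        simp [Finset.prod_mul_distrib]
    _ = s ^ k * ∏ j ∈ (Finset.range (k + 1)).erase i, (((i : ℕ) : ℝ) - j) := by
        rw [← hval, Finset.prod_map]; rfl
    _ = _ := by rw [← prod_erase_range_sub, hi]

theorem fwdDiff_iter_eq_mul_sum_div_prod (k : ℕ) (f : ℝ → ℝ) (c : ℝ) {s : ℝ} (hs : s ≠ 0) :
    (fwdDiff s)^[k] f c = s ^ k * k.factorial * ∑ i : Fin (k + 1), f (c + (i : ℕ) * s) /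
      ∏ j ∈ Finset.univ.erase i, (c + (i : ℕ) * s - (c + (j : ℕ) * s)) := by
  rw [fwdDiff_iter_eq_sum_choose, Finset.sum_range, Finset.mul_sum]
  refine Finset.sum_congr rfl fun i _ => ?_
  have hsign : ((-1 : ℝ) ^ (k - i : ℕ)) * (-1) ^ (k - i : ℕ) = 1 := by rw [← mul_pow]; norm_num
  rw [prod_erase_equispaced_sub, Nat.cast_choose ℝ (Nat.lt_succ_iff.mp i.2)]
  field_simp
  linear_combination f (c + (i : ℕ) * s) * hsign

theorem kMonotoneOn.fwdDiff_iter_nonneg {k : ℕ} {f : ℝ → ℝ} (hf : kMonotoneOn k f) {c s : ℝ}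
    (hs : 0 < s) (hc : -1 < c) (hc' : c + k * s < 1) : 0 ≤ (fwdDiff s)^[k] f c := by
  rw [fwdDiff_iter_eq_mul_sum_div_prod k f c hs.ne']
  refine mul_nonneg (by positivity) (hf (fun i => c + (i : ℕ) * s) (fun i j hij => ?_) fun i => ?_)
  · have hij' : ((i : ℕ) : ℝ) * s = (j : ℕ) * s := add_left_cancel hij
    exact Fin.ext (Nat.cast_injective (mul_right_cancel₀ hs.ne' hij'))
  · have hi := add_natCast_mul_mem_Icc (c := c) hs.le (Finset.mem_range.mpr i.2)
    exact ⟨hc.trans_le hi.1, hi.2.trans_lt hc'⟩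

/- The divided difference of `f` at `y`, `x` and the zeros `q` has only two nonzero terms. -/
theorem kMonotoneOn.div_prod_sub_le_div_prod_sub {n : ℕ} {f : ℝ → ℝ} (hf : kMonotoneOn (n + 1) f)
    {q : Fin n → ℝ} (hq : Function.Injective q) (hq_gt : ∀ j, -1 < q j) (hfq : ∀ j, f (q j) = 0)
    {x y : ℝ} (hx : -1 < x) (hqx : ∀ j, q j < x) (hxy : x < y) (hy : y < 1) :
    f x / ∏ j, (x - q j) ≤ f y / ∏ j, (y - q j) := by
  let p : Fin (n + 1 + 1) → ℝ := Fin.cons y (Fin.cons x q)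
  have hp_inj : Function.Injective p := by
    refine Fin.cons_injective_iff.mpr ⟨?_, Fin.cons_injective_iff.mpr ⟨?_, hq⟩⟩
    · rintro ⟨j, hj⟩
      induction j using Fin.cases with
      | zero => exact hxy.ne hj
      | succ j => exact ((hqx j).trans hxy).ne hj
    · rintro ⟨j, hj⟩
      exact (hqx j).ne hj
  have hp_mem : ∀ i, p i ∈ Ioo (-1 : ℝ) 1 :=
    Fin.cases ⟨hx.trans hxy, hy⟩ <| Fin.cases ⟨hx, hxy.trans hy⟩ fun j =>
      ⟨hq_gt j, ((hqx j).trans hxy).trans hy⟩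
  have hdiv := hf p hp_inj hp_mem
  simp only [prod_univ_erase_eq_prod_succAbove, Fin.sum_univ_succ, Fin.prod_univ_succ, p,
    Fin.succAbove_zero, Fin.succ_succAbove_zero, Fin.succ_succAbove_succ, Fin.cons_zero,
    Fin.cons_succ, hfq, zero_div, Finset.sum_const_zero, add_zero] at hdiv
  have hdiv' : 0 ≤ (f y / ∏ j, (y - q j) - f x / ∏ j, (x - q j)) / (y - x) := by
    convert hdiv using 1
    rw [sub_div, ← neg_sub y x, neg_mul, div_neg, div_div, div_div, mul_comm, mul_comm (y - x)]
    ring_nf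
  rwa [le_div_iff₀ (sub_pos.mpr hxy), zero_mul, sub_nonneg] at hdiv'

variable {k : ℕ} {f : ℝ → ℝ}

theorem exists_one_le_mul_le_of_mem_MPlus (hk : 1 ≤ k) (hf : f ∈ MPlus k) {x y : ℝ}
    (hx : 0 ≤ x) (hxy : x < y) (hy : y < 1) : ∃ r : ℝ, 1 ≤ r ∧ r * f x ≤ f y := by
  obtain ⟨n, rfl⟩ := Nat.exists_eq_add_of_le' hk
  let q : Fin n → ℝ := fun j => -((j : ℕ) + 1) / (n + 1)
  have hq_neg : ∀ j, q j < 0 := fun j => div_neg_of_neg_of_pos (by linarith) (by positivity)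
  have hq_gt : ∀ j, -1 < q j := fun j => by
    have hj : ((j : ℕ) : ℝ) < n := by exact_mod_cast j.2
    rw [lt_div_iff₀ (by positivity)]
    linarith
  have hq_inj : Function.Injective q := fun i j hij => by
    have hij' := (div_left_inj' (by positivity : (n : ℝ) + 1 ≠ 0)).mp hij
    exact Fin.ext (Nat.cast_injective (R := ℝ) (by linarith))
  have hx_pos : 0 < ∏ j, (x - q j) := Finset.prod_pos fun j _ => by linarith [hq_neg j]
  have hprod : ∏ j, (x - q j) ≤ ∏ j, (y - q j) :=
    Finset.prod_le_prod (fun j _ => by linarith [hq_neg j]) fun j _ => by linarith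
  have hquot := hf.1.div_prod_sub_le_div_prod_sub hq_inj hq_gt
    (fun j => hf.2 _ (hq_gt j) (hq_neg j).le) (by linarith) (fun j => (hq_neg j).trans_le hx) hxy hy
  refine ⟨(∏ j, (y - q j)) / ∏ j, (x - q j), (one_le_div hx_pos).mpr hprod, ?_⟩
  rwa [le_div_iff₀ (hx_pos.trans_le hprod), div_mul_eq_mul_div, mul_comm, ← div_mul_eq_mul_div]
    at hquot

theorem nonneg_of_mem_MPlus (hk : 1 ≤ k) (hf : f ∈ MPlus k) {y : ℝ} (hy : y ∈ Ioo (-1 : ℝ) 1) :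
    0 ≤ f y := by
  rcases le_or_gt y 0 with hy0 | hy0
  · exact (hf.2 y hy.1 hy0).ge
  · obtain ⟨r, -, hr⟩ := exists_one_le_mul_le_of_mem_MPlus hk hf le_rfl hy0 hy.2
    rwa [hf.2 0 (by norm_num) le_rfl, mul_zero] at hr

theorem monotoneOn_of_mem_MPlus (hk : 1 ≤ k) (hf : f ∈ MPlus k) :
    MonotoneOn f (Ioo (-1) 1) := by
  intro x hx y hy hxy
  rcases le_or_gt x 0 with hx0 | hx0
  · exact (hf.2 x hx.1 hx0).trans_le (nonneg_of_mem_MPlus hk hf hy)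
  rcases hxy.eq_or_lt with rfl | hxy
  · exact le_rfl
  obtain ⟨r, hr1, hr⟩ := exists_one_le_mul_le_of_mem_MPlus hk hf hx0.le hxy hy.2
  exact (le_mul_of_one_le_left (nonneg_of_mem_MPlus hk hf hx) hr1).trans hr

theorem symmDelta_eq_fwdDiff_iter {h x : ℝ} (hh : 0 ≤ h) (hl : -1 ≤ x - k * h / 2)
    (hr : x + k * h / 2 ≤ 1) : symmDelta k h f x = (fwdDiff h)^[k] f (x - k * h / 2) := by
  have hkh : 0 ≤ k * h := by positivity
  rw [symmDelta, if_pos ⟨⟨hl, by linarith⟩, by linarith, hr⟩, fwdDiff_iter_eq_sum_choose]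

theorem symmDelta_eq_zero_of_one_lt {h x : ℝ} (hx : 1 < x + k * h / 2) : symmDelta k h f x = 0 :=
  if_neg fun hmem => hx.not_ge hmem.2.2

theorem symmDelta_eq_zero_of_lt_neg_one {h x : ℝ} (hx : x - k * h / 2 < -1) :
    symmDelta k h f x = 0 :=
  if_neg fun hmem => hx.not_ge hmem.1.1

theorem symmDelta_eq_zero_of_nonpos (hf : f ∈ MPlus k) {h x : ℝ} (hh : 0 ≤ h)
    (hl : -1 < x - k * h / 2) (hr : x + k * h / 2 ≤ 0) : symmDelta k h f x = 0 := by
  rw [symmDelta_eq_fwdDiff_iter hh hl.le (by linarith)]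
  exact fwdDiff_iter_eq_zero hh fun y hy => hf.2 y (hl.trans_le hy.1) (by linarith [hy.2])

theorem abs_symmDelta_le (hk : 1 ≤ k) (hf : f ∈ MPlus k) {h x : ℝ} (hh : 0 ≤ h)
    (hl : x - k * h / 2 ≠ -1) (hr : x + k * h / 2 ∈ Ioo (-1 : ℝ) 1) :
    |symmDelta k h f x| ≤ 2 ^ k * f (x + k * h / 2) := by
  rcases hl.lt_or_gt with hl | hl
  · rw [symmDelta_eq_zero_of_lt_neg_one hl, abs_zero]
    exact mul_nonneg (by positivity) (nonneg_of_mem_MPlus hk hf hr)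
  · rw [symmDelta_eq_fwdDiff_iter hh hl.le hr.2.le]
    refine abs_fwdDiff_iter_le hh fun y hy => ?_
    have hyr : y ≤ x + k * h / 2 := by linarith [hy.2]
    have hy' : y ∈ Ioo (-1 : ℝ) 1 := ⟨hl.trans_le hy.1, hyr.trans_lt hr.2⟩
    rw [abs_of_nonneg (nonneg_of_mem_MPlus hk hf hy')]
    exact monotoneOn_of_mem_MPlus hk hf hy' hr hyr

end Monotonicity

section Weights

variable {x y r κ β : ℝ}

theorem phiW_nonneg (x : ℝ) : 0 ≤ phiW x :=
  Real.sqrt_nonneg _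

theorem phiW_sq (hx : x ∈ Icc (-1 : ℝ) 1) : phiW x ^ 2 = 1 - x ^ 2 :=
  Real.sq_sqrt (by nlinarith [hx.1, hx.2])

theorem phiW_pos (hx : x ∈ Ioo (-1 : ℝ) 1) : 0 < phiW x :=
  Real.sqrt_pos.mpr (by nlinarith [hx.1, hx.2])

theorem phiW_le_one (x : ℝ) : phiW x ≤ 1 :=
  Real.sqrt_le_one.mpr (by nlinarith [sq_nonneg x])

theorem continuous_phiW : Continuous phiW := by
  unfold phiW; fun_prop

theorem hasDerivAt_phiW (hx : x ∈ Ioo (-1 : ℝ) 1) : HasDerivAt phiW (-(x / phiW x)) x := by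
  have hsq : HasDerivAt (fun x : ℝ => 1 - x ^ 2) (-(2 * x)) x := by
    simpa using (hasDerivAt_pow 2 x).const_sub 1
  refine (hsq.sqrt (by nlinarith [hx.1, hx.2])).congr_deriv ?_
  rw [neg_div, mul_div_mul_left _ _ two_ne_zero, phiW]

theorem le_phiW_of_le_one_sub (hκ : κ ^ 2 ≤ 1 - x) (hx : 0 ≤ x) : κ ≤ phiW x :=
  Real.le_sqrt_of_sq_le (by nlinarith [sq_nonneg κ])

theorem mul_phiW_le_one_sub (hκ : 2 * κ ^ 2 ≤ 1 - x) : κ * phiW x ≤ 1 - x := by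
  have hx : 0 ≤ 1 - x := le_trans (by positivity) hκ
  rcases le_or_gt κ 0 with hκ0 | hκ0
  · exact (mul_nonpos_of_nonpos_of_nonneg hκ0 (phiW_nonneg x)).trans hx
  rw [phiW, ← le_div_iff₀' hκ0]
  refine Real.sqrt_le_iff.mpr ⟨by positivity, ?_⟩
  rw [div_pow, le_div_iff₀ (by positivity)]
  nlinarith [sq_nonneg κ]

theorem phiW_neg (x : ℝ) : phiW (-x) = phiW x := by
  rw [phiW, neg_sq, phiW]

theorem mul_phiW_le_one_add (hκ : 2 * κ ^ 2 ≤ 1 + x) : κ * phiW x ≤ 1 + x := by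
  simpa only [phiW_neg, sub_neg_eq_add] using
    mul_phiW_le_one_sub (x := -x) (by rwa [sub_neg_eq_add])

theorem jacobi_nonneg (α β : ℝ) (hx : x ∈ Icc (-1 : ℝ) 1) : 0 ≤ jacobi α β x :=
  mul_nonneg (Real.rpow_nonneg (by linarith [hx.1]) _) (Real.rpow_nonneg (by linarith [hx.2]) _)

theorem measurable_jacobi (α β : ℝ) : Measurable (jacobi α β) := by
  unfold jacobi; fun_prop

theorem jacobi_neg (α β x : ℝ) : jacobi α β (-x) = jacobi β α x := by
  rw [jacobi, jacobi, sub_neg_eq_add, ← sub_eq_add_neg, mul_comm]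

theorem jacobi_self_eq_rpow (β : ℝ) (hx : x ∈ Icc (-1 : ℝ) 1) :
    jacobi β β x = (1 - x ^ 2) ^ β := by
  rw [jacobi, ← Real.mul_rpow (by linarith [hx.1]) (by linarith [hx.2])]
  ring_nf

theorem jacobi_eq_phiW_rpow (β : ℝ) (hx : x ∈ Icc (-1 : ℝ) 1) :
    jacobi β β x = phiW x ^ (2 * β) := by
  rw [jacobi_self_eq_rpow β hx, ← phiW_sq hx, ← Real.rpow_two, ← Real.rpow_mul (phiW_nonneg x)]

theorem jacobi_le_mul_jacobi_of_nonneg (hβ : 0 ≤ β) (hr : 0 ≤ r) (hx : x ∈ Icc (-1 : ℝ) 1)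
    (hy : y ∈ Icc (-1 : ℝ) 1) (hxy : 1 - x ^ 2 ≤ r * (1 - y ^ 2)) :
    jacobi β β x ≤ r ^ β * jacobi β β y := by
  have hx0 : 0 ≤ 1 - x ^ 2 := by nlinarith [hx.1, hx.2]
  rw [jacobi_self_eq_rpow β hx, jacobi_self_eq_rpow β hy,
    ← Real.mul_rpow hr (by nlinarith [hy.1, hy.2])]
  exact Real.rpow_le_rpow hx0 hxy hβ

theorem jacobi_le_mul_jacobi_of_nonpos (hβ : β ≤ 0) (hr : 0 < r) (hx : x ∈ Icc (-1 : ℝ) 1)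
    (hy : y ∈ Ioo (-1 : ℝ) 1) (hxy : r * (1 - y ^ 2) ≤ 1 - x ^ 2) :
    jacobi β β x ≤ r ^ β * jacobi β β y := by
  have hy0 : 0 < 1 - y ^ 2 := by nlinarith [hy.1, hy.2]
  rw [jacobi_self_eq_rpow β hx, jacobi_self_eq_rpow β (Ioo_subset_Icc_self hy),
    ← Real.mul_rpow hr.le hy0.le]
  exact Real.rpow_le_rpow_of_nonpos (by positivity) hxy hβ

theorem one_sub_sq_rpow_neg_half (k : ℕ) (hx : x ∈ Ioo (-1 : ℝ) 1) :
    (1 - x ^ 2) ^ (-(k : ℝ) / 2) = (phiW x ^ k)⁻¹ := by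
  rw [← phiW_sq (Ioo_subset_Icc_self hx), ← Real.rpow_natCast, ← Real.rpow_natCast,
    ← Real.rpow_mul (phiW_nonneg x), ← Real.rpow_neg (phiW_nonneg x)]
  push_cast
  ring_nf

end Weights

section Shift

/-- The map `x ↦ x + a φ(x)`; the nodes of `Δ_{hφ(x)}^k(f, x)` are its values at `x` for
`a = (i - k/2) h`. -/
noncomputable def phiShift (a x : ℝ) : ℝ := x + a * phiW x

/-- The interval on which the shifts `phiShift a`, `|a| ≤ κ / 2`, are inverted. For a function
vanishing on `(-1, 0]` the differences at the points `x < -1/4` vanish. -/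
def shiftDomain (κ : ℝ) : Set ℝ := Icc (-(1 / 4)) (1 - 2 * κ ^ 2)

/-- An interval containing the images of `shiftDomain κ` under the shifts `phiShift a`,
`|a| ≤ κ / 2`. -/
def shiftRange (κ : ℝ) : Set ℝ := Icc (-(1 / 2)) (1 - κ ^ 2)

variable {a κ x y : ℝ}

theorem measurableSet_shiftDomain (κ : ℝ) : MeasurableSet (shiftDomain κ) :=
  measurableSet_Icc

theorem measurableSet_shiftRange (κ : ℝ) : MeasurableSet (shiftRange κ) :=
  measurableSet_Icc

theorem shiftDomain_subset_Ioo (hκ : 0 < κ) : shiftDomain κ ⊆ Ioo (-1) 1 := fun x hx =>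
  ⟨by linarith [hx.1], by nlinarith [hx.2]⟩

theorem shiftRange_subset_Ioo (hκ : 0 < κ) : shiftRange κ ⊆ Ioo (-1) 1 := fun x hx =>
  ⟨by linarith [hx.1], by nlinarith [hx.2]⟩

theorem continuous_phiShift (a : ℝ) : Continuous (phiShift a) :=
  continuous_id.add (continuous_const.mul continuous_phiW)

theorem hasDerivAt_phiShift (a : ℝ) (hx : x ∈ Ioo (-1 : ℝ) 1) :
    HasDerivAt (phiShift a) (1 - a * x / phiW x) x := by
  refine ((hasDerivAt_id x).add ((hasDerivAt_phiW hx).const_mul a)).congr_deriv ?_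
  ring

theorem mapsTo_phiShift (hκ : 0 < κ) (hκ' : κ ≤ 1 / 2) (ha : |a| ≤ κ / 2) :
    MapsTo (phiShift a) (shiftDomain κ) (shiftRange κ) := by
  intro x hx
  have hφ := mul_phiW_le_one_sub (κ := κ) (x := x) (by linarith [hx.2])
  obtain ⟨hle, hge⟩ := abs_le.mp ha
  constructor
  · change _ ≤ x + a * phiW x
    nlinarith [hx.1, phiW_nonneg x, phiW_le_one x]
  · change x + a * phiW x ≤ _
    nlinarith [hx.2, phiW_nonneg x]

theorem mul_lt_phiW (hκ : 0 < κ) (ha : |a| ≤ κ / 2) (hx : x ∈ shiftDomain κ) :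
    a * x < phiW x := by
  have hx' := shiftDomain_subset_Ioo hκ hx
  have hκφ : κ / 2 < phiW x := Real.lt_sqrt_of_sq_lt (by nlinarith [hx.1, hx.2])
  calc a * x ≤ |a * x| := le_abs_self _
    _ = |a| * |x| := abs_mul _ _
    _ ≤ |a| := mul_le_of_le_one_right (abs_nonneg a) (abs_le.mpr ⟨hx'.1.le, hx'.2.le⟩)
    _ < phiW x := ha.trans_lt hκφ

theorem deriv_phiShift_pos (hκ : 0 < κ) (ha : |a| ≤ κ / 2) (hx : x ∈ shiftDomain κ) :
    0 < 1 - a * x / phiW x :=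
  sub_pos.mpr ((div_lt_one (phiW_pos (shiftDomain_subset_Ioo hκ hx))).mpr (mul_lt_phiW hκ ha hx))

theorem injOn_phiShift (hκ : 0 < κ) (ha : |a| ≤ κ / 2) :
    InjOn (phiShift a) (shiftDomain κ) := by
  refine (strictMonoOn_of_deriv_pos (convex_Icc _ _) (continuous_phiShift a).continuousOn
    fun x hx => ?_).injOn
  have hx : x ∈ shiftDomain κ := interior_subset hx
  rw [(hasDerivAt_phiShift a (shiftDomain_subset_Ioo hκ hx)).deriv]
  exact deriv_phiShift_pos hκ ha hx

theorem one_sub_lt_of_notMem_image_phiShift (hκ : 0 < κ) (hκ' : κ ≤ 1 / 2) (ha : |a| ≤ κ / 2)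
    (hy : 0 ≤ y) (hy' : y ∉ phiShift a '' shiftDomain κ) : 1 - y < 3 * κ ^ 2 := by
  contrapose! hy'
  obtain ⟨hle, hge⟩ := abs_le.mp ha
  refine intermediate_value_Icc (by nlinarith) (continuous_phiShift a).continuousOn ⟨?_, ?_⟩
  · change -(1 / 4) + a * phiW (-(1 / 4)) ≤ y
    nlinarith [phiW_nonneg (-(1 / 4)), phiW_le_one (-(1 / 4))]
  · change y ≤ 1 - 2 * κ ^ 2 + a * phiW (1 - 2 * κ ^ 2)
    have hφ := mul_phiW_le_one_sub (κ := κ) (x := 1 - 2 * κ ^ 2) (by linarith)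
    nlinarith [phiW_nonneg (1 - 2 * κ ^ 2)]

theorem div_phiW_mem_Icc (hκ : 0 < κ) (ha : |a| ≤ κ / 2) (hy : y ∈ shiftRange κ) :
    a / phiW y ∈ Icc (-1 : ℝ) 1 := by
  have hφ := phiW_pos (shiftRange_subset_Ioo hκ hy)
  have hκφ : κ / 2 ≤ phiW y := Real.le_sqrt_of_sq_le (by nlinarith [hy.1, hy.2])
  rw [mem_Icc, ← abs_le, abs_div, abs_of_pos hφ, div_le_one hφ]
  exact ha.trans hκφ

end Shift

section Kernel

/-- The product of the Jacobian and the ratio of the weights in the substitution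
`y = phiShift a x`, expressed through `y` and `b = a / φ(y)`. -/
noncomputable def shiftKernel (β y b : ℝ) : ℝ :=
  (√(1 + b ^ 2))⁻¹ * (√(1 + b ^ 2) - b * y) ^ (-(2 * β + 1))

variable {β a κ x y : ℝ}

theorem mul_lt_sqrt_one_add_sq (hy : y ∈ Icc (-1 : ℝ) 1) (b : ℝ) : b * y < √(1 + b ^ 2) :=
  calc b * y ≤ |b * y| := le_abs_self _
    _ = |b| * |y| := abs_mul _ _
    _ ≤ |b| := mul_le_of_le_one_right (abs_nonneg b) (abs_le.mpr hy)
    _ < √(1 + b ^ 2) := by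
      rw [← Real.sqrt_sq_eq_abs]
      exact Real.sqrt_lt_sqrt (sq_nonneg b) (by linarith)

theorem contDiffOn_shiftKernel (β : ℝ) :
    ContDiffOn ℝ ∞ (fun p : ℝ × ℝ => shiftKernel β p.1 p.2) {p | p.2 * p.1 < √(1 + p.2 ^ 2)} := by
  have hsqrt : ContDiff ℝ ∞ fun p : ℝ × ℝ => √(1 + p.2 ^ 2) :=
    ContDiff.sqrt (by fun_prop) fun p => by positivity
  exact (hsqrt.inv fun p => by positivity).contDiffOn.mul
    (ContDiffOn.rpow_const_of_ne (hsqrt.sub (contDiff_snd.mul contDiff_fst)).contDiffOn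
      fun p hp => (sub_pos.mpr hp).ne')

theorem exists_abs_fwdDiff_iter_shiftKernel_le (k : ℕ) (β : ℝ) :
    ∃ M > 0, ∀ y ∈ Icc (-1 : ℝ) 1, ∀ c h : ℝ, 0 ≤ h → -1 ≤ c → c + k * h ≤ 1 →
      |(fwdDiff h)^[k] (shiftKernel β y) c| ≤ M * h ^ k := by
  have hopen : IsOpen {p : ℝ × ℝ | p.2 * p.1 < √(1 + p.2 ^ 2)} :=
    isOpen_lt (by fun_prop) (by fun_prop)
  exact exists_abs_fwdDiff_iter_le_of_contDiffOn hopen isCompact_Icc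
    (fun p hp => mul_lt_sqrt_one_add_sq hp.1 p.2) k (contDiffOn_shiftKernel β)

theorem exists_abs_shiftKernel_le (β : ℝ) :
    ∃ M > 0, ∀ y ∈ Icc (-1 : ℝ) 1, ∀ b ∈ Icc (-1 : ℝ) 1, |shiftKernel β y b| ≤ M := by
  obtain ⟨M, hM, hle⟩ := exists_abs_fwdDiff_iter_shiftKernel_le 0 β
  exact ⟨M, hM, fun y hy b hb => by simpa using hle y hy b 0 le_rfl hb.1 (by simpa using hb.2)⟩

/- With `y = x + a φ(x)` one has `φ(y)² + a² = (φ(x) - a x)²`, so `√(1 + (a / φ(y))²)` is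
`(φ(x) - a x) / φ(y)`. -/
theorem sqrt_one_add_div_phiW_phiShift_sq (hx : x ∈ Icc (-1 : ℝ) 1)
    (hy : phiShift a x ∈ Ioo (-1 : ℝ) 1) (hax : a * x < phiW x) :
    √(1 + (a / phiW (phiShift a x)) ^ 2) = (phiW x - a * x) / phiW (phiShift a x) := by
  have hψ := phiW_pos hy
  have hψ2 := phiW_sq (Ioo_subset_Icc_self hy)
  rw [← Real.sqrt_sq (div_nonneg (sub_pos.mpr hax).le hψ.le)]
  congr 1
  field_simp
  rw [hψ2, phiShift]
  linear_combination (-a ^ 2 - 1) * phiW_sq hx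

theorem shiftKernel_phiShift (hx : x ∈ Ioo (-1 : ℝ) 1) (hy : phiShift a x ∈ Ioo (-1 : ℝ) 1)
    (hax : a * x < phiW x) :
    shiftKernel β (phiShift a x) (a / phiW (phiShift a x)) =
      phiW (phiShift a x) / (phiW x - a * x) * (phiW (phiShift a x) / phiW x) ^ (-(2 * β + 1)) := by
  have hφ := phiW_pos hx
  have hψ := phiW_pos hy
  have hψ2 := phiW_sq (Ioo_subset_Icc_self hy)
  rw [shiftKernel, sqrt_one_add_div_phiW_phiShift_sq (Ioo_subset_Icc_self hx) hy hax, inv_div]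
  congr 2
  field_simp
  rw [hψ2, phiShift]
  linear_combination phiW_sq (Ioo_subset_Icc_self hx)

theorem jacobi_mul_shiftKernel_phiShift (hx : x ∈ Ioo (-1 : ℝ) 1)
    (hy : phiShift a x ∈ Ioo (-1 : ℝ) 1) (hax : a * x < phiW x) :
    jacobi β β (phiShift a x) * shiftKernel β (phiShift a x) (a / phiW (phiShift a x)) *
      (1 - a * x / phiW x) = jacobi β β x := by
  have hφ := phiW_pos hx
  have hψ := phiW_pos hy
  have hsub := sub_pos.mpr hax
  rw [shiftKernel_phiShift hx hy hax, jacobi_eq_phiW_rpow β (Ioo_subset_Icc_self hx),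
    jacobi_eq_phiW_rpow β (Ioo_subset_Icc_self hy), Real.div_rpow hψ.le hφ.le,
    Real.rpow_neg hψ.le, Real.rpow_neg hφ.le, Real.rpow_add_one hψ.ne', Real.rpow_add_one hφ.ne']
  field_simp

theorem measurable_shiftKernel_div_phiW (β a : ℝ) :
    Measurable fun y => shiftKernel β y (a / phiW y) := by
  have := continuous_phiW.measurable
  unfold shiftKernel; fun_prop

/-- The kernel `shiftKernel` of the substitution `y = phiShift a x`, set to zero where `y` does
not come from a point of `shiftDomain κ`. -/
noncomputable def cutKernel (β κ a : ℝ) : ℝ → ℝ :=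
  (phiShift a '' shiftDomain κ).indicator fun y => shiftKernel β y (a / phiW y)

theorem measurableSet_image_phiShift (a κ : ℝ) : MeasurableSet (phiShift a '' shiftDomain κ) :=
  (isCompact_Icc.image (continuous_phiShift a)).measurableSet

theorem measurable_cutKernel (β κ a : ℝ) : Measurable (cutKernel β κ a) :=
  (measurable_shiftKernel_div_phiW β a).indicator (measurableSet_image_phiShift a κ)

theorem cutKernel_of_mem (hy : y ∈ phiShift a '' shiftDomain κ) :
    cutKernel β κ a y = shiftKernel β y (a / phiW y) :=
  indicator_of_mem hy _

theorem abs_cutKernel_le {M : ℝ}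
    (hM : ∀ y ∈ Icc (-1 : ℝ) 1, ∀ b ∈ Icc (-1 : ℝ) 1, |shiftKernel β y b| ≤ M) (hκ : 0 < κ)
    (ha : |a| ≤ κ / 2) (hy : y ∈ shiftRange κ) : |cutKernel β κ a y| ≤ M := by
  rw [cutKernel, ← Real.norm_eq_abs]
  exact (norm_indicator_le_norm_self _ y).trans <|
    hM y (Ioo_subset_Icc_self (shiftRange_subset_Ioo hκ hy)) _ (div_phiW_mem_Icc hκ ha hy)

theorem integrableOn_cutKernel_mul {g : ℝ → ℝ} (hg : IntegrableOn g (shiftRange κ)) (β : ℝ)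
    (hκ : 0 < κ) (ha : |a| ≤ κ / 2) :
    IntegrableOn (fun y => cutKernel β κ a y * g y) (shiftRange κ) := by
  obtain ⟨M, -, hM⟩ := exists_abs_shiftKernel_le β
  exact Integrable.bdd_mul (c := M) hg (measurable_cutKernel β κ a).aestronglyMeasurable <|
    ae_restrict_of_forall_mem (measurableSet_shiftRange κ) fun y hy => abs_cutKernel_le hM hκ ha hy

section ChangeOfVariables

variable {f : ℝ → ℝ}

theorem hasDerivWithinAt_phiShift (a : ℝ) (hκ : 0 < κ) :
    ∀ x ∈ shiftDomain κ, HasDerivWithinAt (phiShift a) (1 - a * x / phiW x) (shiftDomain κ) x :=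
  fun _ hx => (hasDerivAt_phiShift a (shiftDomain_subset_Ioo hκ hx)).hasDerivWithinAt

theorem eqOn_abs_deriv_smul_cutKernel (f : ℝ → ℝ) (β : ℝ) (hκ : 0 < κ) (hκ' : κ ≤ 1 / 2)
    (ha : |a| ≤ κ / 2) :
    EqOn (fun x => |1 - a * x / phiW x| • (cutKernel β κ a (phiShift a x) *
      (jacobi β β (phiShift a x) * f (phiShift a x))))
      (fun x => jacobi β β x * f (phiShift a x)) (shiftDomain κ) := by
  intro x hx
  have hweight := jacobi_mul_shiftKernel_phiShift (β := β) (shiftDomain_subset_Ioo hκ hx)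
    (shiftRange_subset_Ioo hκ (mapsTo_phiShift hκ hκ' ha hx)) (mul_lt_phiW hκ ha hx)
  simp only [smul_eq_mul, abs_of_pos (deriv_phiShift_pos hκ ha hx),
    cutKernel_of_mem (mem_image_of_mem _ hx)]
  linear_combination f (phiShift a x) * hweight

theorem integrableOn_jacobi_mul_comp_phiShift
    (hf : IntegrableOn (fun y => jacobi β β y * f y) (shiftRange κ)) (hκ : 0 < κ)
    (hκ' : κ ≤ 1 / 2) (ha : |a| ≤ κ / 2) :
    IntegrableOn (fun x => jacobi β β x * f (phiShift a x)) (shiftDomain κ) := by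
  rw [← integrableOn_congr_fun (eqOn_abs_deriv_smul_cutKernel f β hκ hκ' ha)
      (measurableSet_shiftDomain κ),
    ← integrableOn_image_iff_integrableOn_abs_deriv_smul (measurableSet_shiftDomain κ)
      (hasDerivWithinAt_phiShift a hκ) (injOn_phiShift hκ ha)
      fun y => cutKernel β κ a y * (jacobi β β y * f y)]
  exact (integrableOn_cutKernel_mul hf β hκ ha).mono_set (mapsTo_phiShift hκ hκ' ha).image_subset

theorem setIntegral_jacobi_mul_comp_phiShift (f : ℝ → ℝ) (β : ℝ) (hκ : 0 < κ) (hκ' : κ ≤ 1 / 2)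
    (ha : |a| ≤ κ / 2) :
    ∫ x in shiftDomain κ, jacobi β β x * f (phiShift a x) =
      ∫ y in shiftRange κ, cutKernel β κ a y * (jacobi β β y * f y) := by
  rw [← setIntegral_congr_fun (measurableSet_shiftDomain κ)
      (eqOn_abs_deriv_smul_cutKernel f β hκ hκ' ha),
    ← integral_image_eq_integral_abs_deriv_smul (measurableSet_shiftDomain κ)
      (hasDerivWithinAt_phiShift a hκ) (injOn_phiShift hκ ha)
      fun y => cutKernel β κ a y * (jacobi β β y * f y)]
  refine (setIntegral_eq_of_subset_of_forall_sdiff_eq_zero (measurableSet_shiftRange κ)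
    (mapsTo_phiShift hκ hκ' ha).image_subset fun y hy => ?_).symm
  rw [cutKernel, indicator_of_notMem hy.2, zero_mul]

end ChangeOfVariables

/-- The kernel against which `w f` is integrated once each node of `Δ_{hφ}^k f` has been taken as
the new variable: the `k`-th symmetric difference of `cutKernel` in the shift parameter. -/
noncomputable def differenceKernel (k : ℕ) (β h y : ℝ) : ℝ :=
  (fwdDiff h)^[k] (cutKernel β (k * h) · y) (-(k * h / 2))

variable {k : ℕ} {h : ℝ}

theorem abs_le_half_of_mem_Icc {t κ : ℝ} (ht : t ∈ Icc (-(κ / 2)) (-(κ / 2) + κ)) : |t| ≤ κ / 2 :=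
  abs_le.mpr ⟨ht.1, by linarith [ht.2]⟩

theorem differenceKernel_eq_fwdDiff_iter_shiftKernel (hh : 0 ≤ h)
    (hy : ∀ t ∈ Icc (-(k * h / 2)) (-(k * h / 2) + k * h),
      y ∈ phiShift t '' shiftDomain (k * h)) :
    differenceKernel k β h y =
      (fwdDiff (h / phiW y))^[k] (shiftKernel β y) (-(k * (h / phiW y) / 2)) := by
  have hcut : EqOn (cutKernel β (k * h) · y) (fun t => shiftKernel β y (0 + t * (phiW y)⁻¹))
      (Icc (-(k * h / 2)) (-(k * h / 2) + k * h)) := fun t ht => by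
    simp only [cutKernel_of_mem (hy t ht), zero_add, div_eq_mul_inv]
  rw [differenceKernel, fwdDiff_iter_congr hh hcut, fwdDiff_iter_comp_affine]
  ring_nf

theorem exists_abs_differenceKernel_le (hk : 1 ≤ k) (β : ℝ) :
    ∃ C > 0, ∀ h : ℝ, 0 < h → k * h ≤ 1 / 2 → ∀ y ∈ Icc 0 (1 - (k * h) ^ 2),
      |differenceKernel k β h y| ≤ C * (h / phiW y) ^ k := by
  obtain ⟨M₀, hM₀, hkernel⟩ := exists_abs_shiftKernel_le β
  obtain ⟨M, hM, hsmooth⟩ := exists_abs_fwdDiff_iter_shiftKernel_le k β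
  refine ⟨max M (2 ^ k * M₀ * (3 * k) ^ k), by positivity, fun h hh hκ' y hy => ?_⟩
  have hκ : 0 < k * h := by positivity
  have hyR : y ∈ shiftRange (k * h) := ⟨by linarith [hy.1], hy.2⟩
  have hyI := shiftRange_subset_Ioo hκ hyR
  have hφ := phiW_pos hyI
  by_cases himage : ∀ t ∈ Icc (-(k * h / 2)) (-(k * h / 2) + k * h),
    y ∈ phiShift t '' shiftDomain (k * h)
  · have hκφ : k * (h / phiW y) ≤ 1 := by
      rw [← mul_div_assoc, div_le_one hφ]
      exact le_phiW_of_le_one_sub (by linarith [hy.2]) hy.1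
    rw [differenceKernel_eq_fwdDiff_iter_shiftKernel hh.le himage]
    refine (hsmooth y (Ioo_subset_Icc_self hyI) _ _ (by positivity) (by linarith)
      (by linarith)).trans ?_
    gcongr
    exact le_max_left _ _
  · push Not at himage
    obtain ⟨t, ht, hyt⟩ := himage
    have hclose := one_sub_lt_of_notMem_image_phiShift hκ hκ' (abs_le_half_of_mem_Icc ht) hy.1 hyt
    have hone : 1 ≤ 3 * k * (h / phiW y) := by
      rw [← mul_div_assoc, one_le_div hφ]
      exact Real.sqrt_le_iff.mpr ⟨by positivity, by nlinarith [hyI.2, hy.1]⟩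
    calc |differenceKernel k β h y| ≤ 2 ^ k * M₀ :=
          abs_fwdDiff_iter_le hh.le fun s hs =>
            abs_cutKernel_le hkernel hκ (abs_le_half_of_mem_Icc hs) hyR
      _ ≤ 2 ^ k * M₀ * (3 * k * (h / phiW y)) ^ k :=
          le_mul_of_one_le_right (by positivity) (one_le_pow₀ hone)
      _ = 2 ^ k * M₀ * (3 * k) ^ k * (h / phiW y) ^ k := by rw [mul_pow, ← mul_assoc]
      _ ≤ _ := by gcongr; exact le_max_right _ _

end Kernel

section LpOn

variable {g G : ℝ → ℝ} {a b c d C : ℝ}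

theorem LpOn_one_eq_setLIntegral (g : ℝ → ℝ) (a b : ℝ) :
    LpOn g 1 a b = ∫⁻ x in Icc a b, ‖g x‖ₑ :=
  eLpNorm_one_eq_lintegral_enorm

theorem LpOn_one_mono_set (g : ℝ → ℝ) (h : Icc a b ⊆ Icc c d) : LpOn g 1 a b ≤ LpOn g 1 c d :=
  eLpNorm_mono_measure g (Measure.restrict_mono_set volume h)

theorem LpOn_one_le_mul_of_measurePreserving {e : ℝ → ℝ} (he : MeasurePreserving e)
    (he' : MeasurableEmbedding e) (hC : 0 ≤ C)
    (hg : ∀ᵐ x, x ∈ Icc a b → g x ≠ 0 → e x ∈ Icc c d ∧ |g x| ≤ C * |G (e x)|) :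
    LpOn g 1 a b ≤ ENNReal.ofReal C * LpOn G 1 c d := by
  have hpt : ∀ᵐ x ∂volume.restrict (Icc a b),
      ‖g x‖ₑ ≤ ENNReal.ofReal C * (Icc c d).indicator (‖G ·‖ₑ) (e x) := by
    rw [ae_restrict_iff' measurableSet_Icc]
    filter_upwards [hg] with x hgx hx
    rcases eq_or_ne (g x) 0 with h0 | h0
    · rw [h0, enorm_zero]
      exact zero_le
    · obtain ⟨hmem, hle⟩ := hgx hx h0
      rw [indicator_of_mem hmem, ← ofReal_norm, ← ofReal_norm, ← ENNReal.ofReal_mul hC]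
      exact ENNReal.ofReal_le_ofReal hle
  calc LpOn g 1 a b = ∫⁻ x in Icc a b, ‖g x‖ₑ := LpOn_one_eq_setLIntegral g a b
    _ ≤ ∫⁻ x, ENNReal.ofReal C * (Icc c d).indicator (‖G ·‖ₑ) (e x) :=
        (lintegral_mono_ae hpt).trans (setLIntegral_le_lintegral _ _)
    _ = ENNReal.ofReal C * LpOn G 1 c d := by
        rw [lintegral_const_mul' _ _ ENNReal.ofReal_ne_top, he.lintegral_comp_emb he',
          lintegral_indicator measurableSet_Icc, LpOn_one_eq_setLIntegral]

theorem LpOn_one_le_mul (hC : 0 ≤ C)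
    (hg : ∀ᵐ x, x ∈ Icc a b → g x ≠ 0 → x ∈ Icc c d ∧ |g x| ≤ C * |G x|) :
    LpOn g 1 a b ≤ ENNReal.ofReal C * LpOn G 1 c d :=
  LpOn_one_le_mul_of_measurePreserving (MeasurePreserving.id volume) MeasurableEmbedding.id hC hg

theorem LpOn_one_le_of_integral_eq (hg : IntegrableOn g (Icc a b)) (hg0 : ∀ x ∈ Icc a b, 0 ≤ g x)
    (hgG : ∫ x in Icc a b, g x = ∫ x in Icc c d, G x) : LpOn g 1 a b ≤ LpOn G 1 c d := by
  have hnorm : ∫ x in Icc a b, ‖g x‖ = ∫ x in Icc c d, G x := by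
    rw [← hgG]
    exact setIntegral_congr_fun measurableSet_Icc fun x hx => Real.norm_of_nonneg (hg0 x hx)
  rw [LpOn_one_eq_setLIntegral, LpOn_one_eq_setLIntegral,
    ← ofReal_integral_norm_eq_lintegral_enorm hg, hnorm]
  exact (Real.ofReal_le_enorm _).trans (enorm_integral_le_lintegral_enorm _)

theorem LpOn_one_le_add (g : ℝ → ℝ) (a b c : ℝ) :
    LpOn g 1 a b ≤ LpOn g 1 a (min b c) + LpOn g 1 (max a c) b := by
  have hsub : Icc a b ⊆ Icc a (min b c) ∪ Icc (max a c) b := fun x hx =>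
    (le_total x c).imp (fun hxc => ⟨hx.1, le_min hx.2 hxc⟩) fun hcx => ⟨max_le hx.1 hcx, hx.2⟩
  simp only [LpOn_one_eq_setLIntegral]
  exact (lintegral_mono_set hsub).trans (lintegral_union_le _ _ _)

theorem integrableOn_of_mem_WSet {α β : ℝ} {f : ℝ → ℝ} (hf : f ∈ WSet 1 α β) :
    IntegrableOn (fun x => jacobi α β x * f x) (Icc (-1) 1) :=
  memLp_one_iff_integrable.mp
    ⟨((measurable_jacobi α β).aemeasurable.mul hf.1).aestronglyMeasurable,
      lt_top_iff_ne_top.mpr hf.2⟩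

end LpOn

section MainPart

variable {k : ℕ} {β h x : ℝ} {f : ℝ → ℝ}

theorem nodes_mem_of_mem_shiftDomain (hk : 1 ≤ k) (hh : 0 < h) (hκ' : k * h ≤ 1 / 2)
    (hx : x ∈ shiftDomain (k * h)) :
    -1 < x - k * (h * phiW x) / 2 ∧ x + k * (h * phiW x) / 2 < 1 := by
  have hκ : 0 < k * h := by positivity
  have hl := shiftRange_subset_Ioo hκ <| mapsTo_phiShift (a := -(k * h / 2)) hκ hκ'
    (by rw [abs_neg, abs_of_pos (by positivity)]) hx
  have hr := shiftRange_subset_Ioo hκ <| mapsTo_phiShift (a := k * h / 2) hκ hκ'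
    (by rw [abs_of_pos (by positivity)]) hx
  unfold phiShift at hl hr
  exact ⟨by linarith [hl.1], by linarith [hr.2]⟩

theorem jacobi_mul_symmDelta_eq_fwdDiff_iter (β : ℝ) (f : ℝ → ℝ) (hk : 1 ≤ k) (hh : 0 < h)
    (hκ' : k * h ≤ 1 / 2) (hx : x ∈ shiftDomain (k * h)) :
    jacobi β β x * symmDelta k (h * phiW x) f x =
      (fwdDiff h)^[k] (fun a => jacobi β β x * f (phiShift a x)) (-(k * h / 2)) := by
  obtain ⟨hl, hr⟩ := nodes_mem_of_mem_shiftDomain hk hh hκ' hx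
  simp only [mul_comm (jacobi β β x), phiShift]
  rw [fwdDiff_iter_mul_const, fwdDiff_iter_comp_affine,
    symmDelta_eq_fwdDiff_iter (mul_nonneg hh.le (phiW_nonneg x)) hl.le hr.le]
  ring_nf

theorem jacobi_mul_symmDelta_nonneg (hf : kMonotoneOn k f) (hk : 1 ≤ k) (hh : 0 < h)
    (hκ' : k * h ≤ 1 / 2) (hx : x ∈ shiftDomain (k * h)) :
    0 ≤ jacobi β β x * symmDelta k (h * phiW x) f x := by
  obtain ⟨hl, hr⟩ := nodes_mem_of_mem_shiftDomain hk hh hκ' hx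
  have hxI := shiftDomain_subset_Ioo (by positivity) hx
  have hφ := phiW_pos hxI
  refine mul_nonneg (jacobi_nonneg β β (Ioo_subset_Icc_self hxI)) ?_
  rw [symmDelta_eq_fwdDiff_iter (by positivity) hl.le hr.le]
  exact hf.fwdDiff_iter_nonneg (by positivity) hl (by linarith)

theorem integrableOn_jacobi_mul_symmDelta (hk : 1 ≤ k) (hh : 0 < h) (hκ' : k * h ≤ 1 / 2)
    (hf : IntegrableOn (fun y => jacobi β β y * f y) (shiftRange (k * h))) :
    IntegrableOn (fun x => jacobi β β x * symmDelta k (h * phiW x) f x) (shiftDomain (k * h)) := by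
  have hκ : 0 < k * h := by positivity
  rw [integrableOn_congr_fun
    (fun x hx => jacobi_mul_symmDelta_eq_fwdDiff_iter β f hk hh hκ' hx)
    (measurableSet_shiftDomain (k * h))]
  exact integrable_fwdDiff_iter (F := fun a x => jacobi β β x * f (phiShift a x)) hh.le fun a ha =>
    integrableOn_jacobi_mul_comp_phiShift hf hκ hκ' (abs_le_half_of_mem_Icc ha)

theorem setIntegral_jacobi_mul_symmDelta (hk : 1 ≤ k) (hh : 0 < h) (hκ' : k * h ≤ 1 / 2)
    (hf : IntegrableOn (fun y => jacobi β β y * f y) (shiftRange (k * h))) :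
    ∫ x in shiftDomain (k * h), jacobi β β x * symmDelta k (h * phiW x) f x =
      ∫ y in shiftRange (k * h), differenceKernel k β h y * (jacobi β β y * f y) := by
  have hκ : 0 < k * h := by positivity
  rw [setIntegral_congr_fun (measurableSet_shiftDomain (k * h))
      fun x hx => jacobi_mul_symmDelta_eq_fwdDiff_iter β f hk hh hκ' hx,
    integral_fwdDiff_iter (F := fun a x => jacobi β β x * f (phiShift a x)) hh.le fun a ha =>
      integrableOn_jacobi_mul_comp_phiShift hf hκ hκ' (abs_le_half_of_mem_Icc ha),
    fwdDiff_iter_congr hh.le fun a ha =>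
      setIntegral_jacobi_mul_comp_phiShift f β hκ hκ' (abs_le_half_of_mem_Icc ha),
    ← integral_fwdDiff_iter hh.le fun a ha =>
      integrableOn_cutKernel_mul hf β hκ (abs_le_half_of_mem_Icc ha)]
  simp only [fwdDiff_iter_mul_const, differenceKernel]

theorem symmDelta_mul_phiW_eq_zero (hf : f ∈ MPlus k) (hh : 0 ≤ h) (hκ' : k * h ≤ 1 / 2)
    (hl : 2 * (k * h) ^ 2 < 1 + x) (hr : x < -(1 / 4)) : symmDelta k (h * phiW x) f x = 0 := by
  have hκφ := mul_phiW_le_one_add hl.le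
  have hκφ' : k * h * phiW x ≤ 1 / 2 :=
    (mul_le_of_le_one_right (by positivity) (phiW_le_one x)).trans hκ'
  have hx : 0 < 1 + x := lt_of_le_of_lt (by positivity) hl
  exact symmDelta_eq_zero_of_nonpos hf (mul_nonneg hh (phiW_nonneg x)) (by linarith) (by linarith)

theorem LpOn_jacobi_mul_symmDelta_le (hf : f ∈ MPlus k ∩ WSet 1 β β) (hk : 1 ≤ k)
    (hh : 0 < h) (hκ' : k * h ≤ 1 / 2) :
    LpOn (fun x => jacobi β β x * symmDelta k (h * phiW x) f x) 1
        (-1 + 2 * (k * h) ^ 2) (1 - 2 * (k * h) ^ 2) ≤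
      LpOn (fun y => differenceKernel k β h y * (jacobi β β y * f y)) 1
        (-(1 / 2)) (1 - (k * h) ^ 2) := by
  have hκ : 0 < k * h := by positivity
  have hint : IntegrableOn (fun y => jacobi β β y * f y) (shiftRange (k * h)) :=
    (integrableOn_of_mem_WSet hf.2).mono_set
      ((shiftRange_subset_Ioo hκ).trans Ioo_subset_Icc_self)
  calc LpOn (fun x => jacobi β β x * symmDelta k (h * phiW x) f x) 1
        (-1 + 2 * (k * h) ^ 2) (1 - 2 * (k * h) ^ 2)
      ≤ ENNReal.ofReal 1 * LpOn (fun x => jacobi β β x * symmDelta k (h * phiW x) f x) 1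
        (-(1 / 4)) (1 - 2 * (k * h) ^ 2) := by
        refine LpOn_one_le_mul zero_le_one ?_
        filter_upwards [volume.ae_ne (-1 + 2 * (k * h) ^ 2)] with x hne hx h0
        refine ⟨⟨?_, hx.2⟩, (one_mul _).ge⟩
        have hlt := lt_of_le_of_ne hx.1 hne.symm
        contrapose! h0
        rw [symmDelta_mul_phiW_eq_zero hf.1 hh.le hκ' (by linarith) h0, mul_zero]
    _ = LpOn (fun x => jacobi β β x * symmDelta k (h * phiW x) f x) 1
        (-(1 / 4)) (1 - 2 * (k * h) ^ 2) := by rw [ENNReal.ofReal_one, one_mul]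
    _ ≤ _ := LpOn_one_le_of_integral_eq (integrableOn_jacobi_mul_symmDelta hk hh hκ' hint)
        (fun x hx => jacobi_mul_symmDelta_nonneg hf.1.1 hk hh hκ' hx)
        (setIntegral_jacobi_mul_symmDelta hk hh hκ' hint)

theorem exists_LpOn_differenceKernel_mul_le (hk : 1 ≤ k) (β : ℝ) :
    ∃ C > 0, ∀ f ∈ MPlus k, ∀ h : ℝ, 0 < h → k * h ≤ 1 / 2 →
      LpOn (fun y => differenceKernel k β h y * (jacobi β β y * f y)) 1
          (-(1 / 2)) (1 - (k * h) ^ 2) ≤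
        ENNReal.ofReal (C * h ^ k) *
          LpOn (fun y => (1 - y ^ 2) ^ (-(k : ℝ) / 2) * (jacobi β β y * f y)) 1
            0 (1 - (k * h) ^ 2) := by
  obtain ⟨C, hC, hkernel⟩ := exists_abs_differenceKernel_le hk β
  refine ⟨C, hC, fun f hf h hh hκ' => LpOn_one_le_mul (by positivity) ?_⟩
  refine Eventually.of_forall fun y hy h0 => ?_
  have hy0 : 0 ≤ y := by
    contrapose! h0
    rw [hf.2 y (by linarith [hy.1]) h0.le, mul_zero, mul_zero]
  have hyI := shiftRange_subset_Ioo (by positivity) hy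
  have hφ := phiW_pos hyI
  refine ⟨⟨hy0, hy.2⟩, ?_⟩
  rw [abs_mul, one_sub_sq_rpow_neg_half k hyI, abs_mul (phiW y ^ k)⁻¹,
    abs_of_pos (by positivity : 0 < (phiW y ^ k)⁻¹), ← mul_assoc]
  gcongr
  exact (hkernel h hh hκ' y ⟨hy0, hy.2⟩).trans_eq (by rw [div_pow]; ring)

/- The step `h` is compared with the step `h / 2` of `innerTerm`, for which the interval of
integration is `[0, 1 - (kh)² / 2]`. -/
theorem exists_OmegaMain_le (hk : 1 ≤ k) (β : ℝ) :
    ∃ C > 0, ∀ f ∈ MPlus k ∩ WSet 1 β β, ∀ δ : ℝ, δ ≤ 1 / (2 * k) →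
      OmegaMain k f δ (jacobi β β) 1 ≤ ENNReal.ofReal C * innerTerm k β f δ := by
  obtain ⟨C, hC, hkernel⟩ := exists_LpOn_differenceKernel_mul_le hk β
  refine ⟨C * 2 ^ k, by positivity, fun f hf δ hδ => iSup₂_le fun h hh => ?_⟩
  have hh0 : 0 < h := hh.1
  have hκ' : k * h ≤ 1 / 2 := by
    have := hh.2.trans hδ
    rw [le_div_iff₀ (by positivity)] at this
    linarith
  have hinner : ENNReal.ofReal ((h / 2) ^ k) *
      LpOn (fun y => (1 - y ^ 2) ^ (-(k : ℝ) / 2) * (jacobi β β y * f y)) 1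
        0 (1 - 2 * (k : ℝ) ^ 2 * (h / 2) ^ 2) ≤ innerTerm k β f δ :=
    le_iSup₂_of_le (h / 2) ⟨by linarith, by linarith [hh.2]⟩ le_rfl
  rw [mul_assoc 2, ← mul_pow]
  calc _ ≤ _ := LpOn_jacobi_mul_symmDelta_le hf hk hh0 hκ'
    _ ≤ ENNReal.ofReal (C * h ^ k) * _ := hkernel f hf.1 h hh0 hκ'
    _ ≤ ENNReal.ofReal (C * h ^ k) * LpOn _ 1 0 (1 - 2 * (k : ℝ) ^ 2 * (h / 2) ^ 2) := by
        gcongr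
        exact LpOn_one_mono_set _ (Icc_subset_Icc_right (by nlinarith [sq_nonneg (k * h)]))
    _ = ENNReal.ofReal (C * 2 ^ k) * (ENNReal.ofReal ((h / 2) ^ k) * LpOn _ 1 0 _) := by
        rw [← mul_assoc, ← ENNReal.ofReal_mul (by positivity), mul_assoc C, ← mul_pow,
          mul_div_cancel₀ h two_ne_zero]
    _ ≤ _ := by gcongr

end MainPart

section EndParts

variable {k : ℕ} {β δ h r x y : ℝ} {f : ℝ → ℝ}

theorem OmegaBwd_le (hk : 1 ≤ k) (β : ℝ) (hf : f ∈ MPlus k)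
    (hδ : 2 * (k : ℝ) ^ 2 * δ ^ 2 ≤ 1 / 2) :
    OmegaBwd k f δ (jacobi β β) 1 ≤ ENNReal.ofReal (2 ^ k) * endTerm k β f δ := by
  refine iSup₂_le fun h hh => LpOn_one_le_mul (by positivity) ?_
  filter_upwards [volume.ae_ne 1, volume.ae_ne (k * h - 1)] with x hx1 hxh hx _
  have hxI : x ∈ Ioo (-1 : ℝ) 1 := ⟨by linarith [hx.1], lt_of_le_of_ne hx.2 hx1⟩
  have hΔ := abs_symmDelta_le (x := x - k * h / 2) hk hf hh.1.le
    (fun heq => hxh (by linarith)) (by rwa [sub_add_cancel])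
  refine ⟨⟨by nlinarith [hx.1, sq_nonneg (k * δ)], hx.2⟩, ?_⟩
  rw [sub_add_cancel] at hΔ
  rw [abs_mul, abs_mul, abs_of_nonneg (nonneg_of_mem_MPlus hk hf hxI), mul_left_comm]
  gcongr

theorem abs_jacobi_mul_symmDelta_add_half_le (hk : 1 ≤ k) (hf : f ∈ MPlus k) (hh : 0 ≤ h)
    (hx : -1 < x) (hxy : x + k * h ≤ y) (hy : y < 1) (hr : 0 ≤ r)
    (hw : jacobi β β x ≤ r * jacobi β β y) :
    |jacobi β β x * symmDelta k h f (x + k * h / 2)| ≤ 2 ^ k * r * |jacobi β β y * f y| := by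
  have hkh : 0 ≤ k * h := by positivity
  have hend : x + k * h / 2 + k * h / 2 = x + k * h := by ring
  have hmem : x + k * h ∈ Ioo (-1 : ℝ) 1 := ⟨by linarith, by linarith⟩
  have hyI : y ∈ Ioo (-1 : ℝ) 1 := ⟨by linarith, hy⟩
  have hΔ : |symmDelta k h f (x + k * h / 2)| ≤ 2 ^ k * f (x + k * h) := by
    simpa only [hend] using
      abs_symmDelta_le (x := x + k * h / 2) hk hf hh (by linarith) (by rwa [hend])
  have hwx : 0 ≤ jacobi β β x := jacobi_nonneg β β ⟨hx.le, by linarith⟩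
  have hwy : 0 ≤ jacobi β β y := jacobi_nonneg β β (Ioo_subset_Icc_self hyI)
  have hfy := nonneg_of_mem_MPlus hk hf hyI
  rw [abs_mul, abs_of_nonneg hwx, abs_of_nonneg (mul_nonneg hwy hfy)]
  calc jacobi β β x * |symmDelta k h f (x + k * h / 2)|
      ≤ (r * jacobi β β y) * (2 ^ k * f (x + k * h)) := by gcongr
    _ ≤ (r * jacobi β β y) * (2 ^ k * f y) := by
        gcongr
        exact monotoneOn_of_mem_MPlus hk hf hmem hyI hxy
    _ = 2 ^ k * r * (jacobi β β y * f y) := by ring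

theorem LpOn_forward_le_of_add_le_neg (hk : 1 ≤ k) (β : ℝ) (hf : f ∈ MPlus k) (hh : 0 < h) {b : ℝ}
    (hb : b ≤ -1 + 3 * (k : ℝ) ^ 2 * δ ^ 2) (hbh : b ≤ -(k * h / 2)) :
    LpOn (fun x => jacobi β β x * symmDelta k h f (x + k * h / 2)) 1 (-1) b ≤
      ENNReal.ofReal (2 ^ k) * endTerm k β f δ := by
  refine LpOn_one_le_mul_of_measurePreserving (Measure.measurePreserving_neg volume)
    (MeasurableEquiv.neg ℝ).measurableEmbedding (by positivity) ?_
  filter_upwards [volume.ae_ne (-1)] with x hne hx _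
  have hx1 : -1 < x := lt_of_le_of_ne hx.1 hne.symm
  refine ⟨⟨by linarith [hx.2], by linarith⟩, ?_⟩
  simpa only [mul_one] using abs_jacobi_mul_symmDelta_add_half_le hk hf hh.le hx1
    (by linarith [hx.2]) (by linarith) zero_le_one (by rw [jacobi_neg, one_mul])

theorem LpOn_forward_le_of_neg_le_add (hk : 1 ≤ k) (hβ : β ≤ 0) (hf : f ∈ MPlus k) (hh : 0 < h)
    {a b : ℝ} (ha : -1 ≤ a) (hah : -(k * h / 2) ≤ a) (hb : b ≤ -1 + 3 * (k : ℝ) ^ 2 * δ ^ 2) :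
    LpOn (fun x => jacobi β β x * symmDelta k h f (x + k * h / 2)) 1 a b ≤
      ENNReal.ofReal (2 ^ k * (1 / 2) ^ β) * endTerm k β f δ := by
  refine LpOn_one_le_mul_of_measurePreserving (measurePreserving_add_right volume (k * h))
    (measurableEmbedding_addRight (k * h)) (by positivity) ?_
  filter_upwards [volume.ae_ne (-1), volume.ae_ne (1 - k * h)] with x hne hne' hx h0
  have hkh : 0 < k * h := by positivity
  have hx1 : -1 < x := lt_of_le_of_ne (ha.trans hx.1) hne.symm
  have hle : x + k * h ≤ 1 := by
    contrapose! h0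
    rw [symmDelta_eq_zero_of_one_lt (by linarith), mul_zero]
  have hlt : x + k * h < 1 := lt_of_le_of_ne hle fun heq => hne' (by linarith)
  have hreflect : 1 - (x + k * h) ≤ 1 + x := by linarith [hx.1]
  have hxb := hx.2
  refine ⟨⟨by linarith, hle⟩, abs_jacobi_mul_symmDelta_add_half_le hk hf hh.le hx1 le_rfl hlt
    (by positivity) ?_⟩
  refine jacobi_le_mul_jacobi_of_nonpos hβ (by norm_num) ⟨hx1.le, by linarith⟩
    ⟨by linarith, hlt⟩ ?_
  nlinarith

theorem OmegaFwd_le_of_nonpos (hk : 1 ≤ k) (hβ : β ≤ 0) (hf : f ∈ MPlus k) :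
    OmegaFwd k f δ (jacobi β β) 1 ≤
      ENNReal.ofReal (2 ^ k + 2 ^ k * (1 / 2) ^ β) * endTerm k β f δ := by
  refine iSup₂_le fun h hh => ?_
  have hb : -1 + 2 * (k : ℝ) ^ 2 * δ ^ 2 ≤ -1 + 3 * (k : ℝ) ^ 2 * δ ^ 2 := by
    nlinarith [sq_nonneg (k * δ)]
  rw [ENNReal.ofReal_add (by positivity) (by positivity), add_mul]
  exact (LpOn_one_le_add _ _ _ (-(k * h / 2))).trans <| add_le_add
    (LpOn_forward_le_of_add_le_neg hk β hf hh.1 ((min_le_left _ _).trans hb) (min_le_right _ _))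
    (LpOn_forward_le_of_neg_le_add hk hβ hf hh.1 (le_max_left _ _) (le_max_right _ _) hb)

/- The translation by `2 - 3k²δ²` carries the left end interval into the part of
`[1 - 3k²δ², 1]` at distance at least `k²δ²` from `1`, and moves every point beyond the last node
of the difference. -/
theorem OmegaFwd_le_of_nonneg (hk : 1 ≤ k) (hβ : 0 ≤ β) (hf : f ∈ MPlus k)
    (hδ : 2 * (k : ℝ) ^ 2 * δ ^ 2 ≤ 1 / 2)
    (hδ' : (k + 3 / 2) * (2 * (k : ℝ) ^ 2 * δ ^ 2) ≤ 2) :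
    OmegaFwd k f δ (jacobi β β) 1 ≤ ENNReal.ofReal (2 ^ k * 4 ^ β) * endTerm k β f δ := by
  refine iSup₂_le fun h hh => LpOn_one_le_mul_of_measurePreserving
    (measurePreserving_add_right volume (2 - 3 * (k : ℝ) ^ 2 * δ ^ 2))
    (measurableEmbedding_addRight _) (by positivity) ?_
  filter_upwards [volume.ae_ne (-1)] with x hne hx _
  have hx1 : -1 < x := lt_of_le_of_ne hx.1 hne.symm
  have hxδ := hx.2
  have hδ0 : 0 < 2 * (k : ℝ) ^ 2 * δ ^ 2 := hh.1.trans_le hh.2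
  have hkh : k * h ≤ k * (2 * (k : ℝ) ^ 2 * δ ^ 2) := by gcongr; exact hh.2
  refine ⟨⟨by linarith [hδ0], by linarith⟩, abs_jacobi_mul_symmDelta_add_half_le hk hf hh.1.le hx1
    (by linarith) (by linarith) (by positivity) ?_⟩
  refine jacobi_le_mul_jacobi_of_nonneg hβ (by norm_num) ⟨hx1.le, by linarith⟩
    ⟨by linarith, by linarith⟩ ?_
  nlinarith

theorem exists_OmegaFwd_le (hk : 1 ≤ k) (β : ℝ) :
    ∃ C > 0, ∀ f ∈ MPlus k, ∀ δ : ℝ, 2 * (k : ℝ) ^ 2 * δ ^ 2 ≤ 1 / 2 →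
      (k ≤ 2 ∨ β ≤ 0 ∨ ((k : ℝ) + 1) * (2 * (k : ℝ) ^ 2 * δ ^ 2) ≤ 3 / 2) →
      OmegaFwd k f δ (jacobi β β) 1 ≤ ENNReal.ofReal C * endTerm k β f δ := by
  rcases le_or_gt β 0 with hβ | hβ
  · exact ⟨_, by positivity, fun f hf δ _ _ => OmegaFwd_le_of_nonpos hk hβ hf⟩
  refine ⟨_, by positivity, fun f hf δ hδ hcases => OmegaFwd_le_of_nonneg hk hβ.le hf hδ ?_⟩
  rcases hcases with hk2 | hβ' | hsmall
  · have hk2' : (k : ℝ) ≤ 2 := by exact_mod_cast hk2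
    calc ((k : ℝ) + 3 / 2) * (2 * (k : ℝ) ^ 2 * δ ^ 2) ≤ (2 + 3 / 2) * (1 / 2) := by gcongr
      _ ≤ 2 := by norm_num
  · exact absurd hβ' hβ.not_ge
  · linarith

end EndParts

theorem two_mul_sq_mul_sq_le_half {k : ℕ} (hk : 1 ≤ k) {δ : ℝ} (hδ0 : 0 ≤ δ)
    (hδ : δ ≤ 1 / (2 * k)) : 2 * (k : ℝ) ^ 2 * δ ^ 2 ≤ 1 / 2 := by
  have hkδ : k * δ ≤ 1 / 2 := by
    rw [le_div_iff₀ (by positivity)] at hδ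
    linarith
  calc 2 * (k : ℝ) ^ 2 * δ ^ 2 = 2 * (k * δ) ^ 2 := by ring
    _ ≤ 2 * (1 / 2) ^ 2 := by gcongr
    _ = 1 / 2 := by norm_num

theorem statement11 (k : ℕ) (hk : 1 ≤ k) (β : ℝ) :
    ∃ c > (0 : ℝ), ∀ f : ℝ → ℝ, f ∈ MPlus k ∩ WSet 1 β β →
      ∀ δ : ℝ, 0 < δ → δ ≤ 1 / (2 * (k : ℝ)) →
        (OmegaMain k f δ (jacobi β β) 1 + OmegaBwd k f δ (jacobi β β) 1 ≤
          ENNReal.ofReal c * endTerm k β f δ + ENNReal.ofReal c * innerTerm k β f δ) ∧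
        (k ≤ 2 ∨ β ≤ 0 ∨ ((k : ℝ) + 1) * (2 * (k : ℝ) ^ 2 * δ ^ 2) ≤ 3 / 2 →
          omegaDT k f δ (jacobi β β) 1 ≤
            ENNReal.ofReal c * endTerm k β f δ + ENNReal.ofReal c * innerTerm k β f δ) := by
  obtain ⟨C₁, hC₁, hmain⟩ := exists_OmegaMain_le hk β
  obtain ⟨C₂, hC₂, hfwd⟩ := exists_OmegaFwd_le hk β
  refine ⟨max C₁ (C₂ + 2 ^ k), by positivity, fun f hf δ hδ0 hδ => ?_⟩
  have hδ' := two_mul_sq_mul_sq_le_half hk hδ0.le hδ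
  have hmain' := (hmain f hf δ hδ).trans
    (mul_le_mul_left (ENNReal.ofReal_le_ofReal (le_max_left C₁ (C₂ + 2 ^ k))) _)
  have hbwd := OmegaBwd_le hk β hf.1 hδ'
  have hle : ENNReal.ofReal C₂ * endTerm k β f δ + ENNReal.ofReal (2 ^ k) * endTerm k β f δ ≤
      ENNReal.ofReal (max C₁ (C₂ + 2 ^ k)) * endTerm k β f δ := by
    rw [← add_mul, ← ENNReal.ofReal_add hC₂.le (by positivity)]
    gcongr
    exact le_max_right _ _
  refine ⟨?_, fun hcases => ?_⟩
  · rw [add_comm]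
    exact add_le_add ((hbwd.trans le_add_self).trans hle) hmain'
  · rw [omegaDT, add_assoc, add_comm]
    exact add_le_add ((add_le_add (hfwd f hf.1 δ hδ' hcases) hbwd).trans hle) hmain'
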